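/- arXiv:1912.01392 — 2 statements merged into one kernel-verified Lean document; each statement's English description precedes it below -/
import Mathlib

section
/- Let (A, Δ, Δ') be a commutative Hopf brace with antipodes S (for Δ) and T (for Δ'), set ρ(x) = x_{(-1)} ⊗ x_{(0)} = S(x_1) x_{21'} ⊗ x_{22'} and φ(y) = y_{[0]} ⊗ y_{[1]} = (T(y_{1'}))_{(-1)} y_{2'} ⊗ (T(y_{1'}))_{(0)} y_{3'}, and let c(x ⊗ y) = x_{(-1)} y_{[0]} ⊗ x_{(0)} y_{[1]}. Define γ: A ⊗ A → A ⊗ A by γ(x ⊗ y) = x y_{(-1)} ⊗ y_{(0)}. Then γ is bijective with inverse γ⁻¹(x ⊗ y) = x T(y_{(-1)}) ⊗ y_{(0)}, and γ⁻¹ ∘ c ∘ γ = σ, where σ(x ⊗ y) = y_2 ⊗ x S(y_1) y_3. -/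
open TensorProduct

noncomputable section

namespace HopfPaper

/-- A Hopf algebra structure (comultiplication `Δ`, counit `ε`, antipode `S`) on a
given `k`-algebra `H`, expressed in terms of `k`-linear maps.  Together with the
algebra structure of `H` this is exactly the data of a Hopf algebra
`(H, m, 1, Δ, ε, S)` over the field `k`. -/
structure HopfStruct (k : Type*) [Field k] (H : Type*) [Ring H] [Algebra k H] where
  /-- the comultiplication -/
  Δ : H →ₗ[k] H ⊗[k] H
  /-- the counit -/
  ε : H →ₗ[k] k
  /-- the antipode -/
  S : H →ₗ[k] H
  coassoc : ∀ h : H,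
    TensorProduct.map (LinearMap.id : H →ₗ[k] H) Δ (Δ h)
      = TensorProduct.assoc k H H H
          (TensorProduct.map Δ (LinearMap.id : H →ₗ[k] H) (Δ h))
  counit_left : ∀ h : H,
    TensorProduct.lid k H (TensorProduct.map ε (LinearMap.id : H →ₗ[k] H) (Δ h)) = h
  counit_right : ∀ h : H,
    TensorProduct.rid k H (TensorProduct.map (LinearMap.id : H →ₗ[k] H) ε (Δ h)) = h
  comul_mul : ∀ a b : H, Δ (a * b) = Δ a * Δ b
  comul_one : Δ 1 = 1
  counit_mul : ∀ a b : H, ε (a * b) = ε a * ε b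
  counit_one : ε 1 = 1
  antipode_left : ∀ h : H,
    LinearMap.mul' k H (TensorProduct.map S (LinearMap.id : H →ₗ[k] H) (Δ h))
      = algebraMap k H (ε h)
  antipode_right : ∀ h : H,
    LinearMap.mul' k H (TensorProduct.map (LinearMap.id : H →ₗ[k] H) S (Δ h))
      = algebraMap k H (ε h)

variable (k : Type*) [Field k]

/-- `m ↦ m ⊗ 1`. -/
def ι₁ (M N : Type*) [Ring M] [Algebra k M] [Ring N] [Algebra k N] :
    M →ₗ[k] M ⊗[k] N :=
  (TensorProduct.mk k M N).flip 1

/-- `n ↦ 1 ⊗ n`. -/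
def ι₂ (M N : Type*) [Ring M] [Algebra k M] [Ring N] [Algebra k N] :
    N →ₗ[k] M ⊗[k] N :=
  TensorProduct.mk k M N 1

/-- multiplication of three factors, `x ⊗ (y ⊗ z) ↦ x * y * z`. -/
def mul₃ (T : Type*) [Ring T] [Algebra k T] : T ⊗[k] (T ⊗[k] T) →ₗ[k] T :=
  (LinearMap.mul' k T).comp
    (TensorProduct.map (LinearMap.id : T →ₗ[k] T) (LinearMap.mul' k T))

/-- multiplication of four factors. -/
def mul₄ (T : Type*) [Ring T] [Algebra k T] :
    T ⊗[k] (T ⊗[k] (T ⊗[k] T)) →ₗ[k] T :=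
  (LinearMap.mul' k T).comp
    (TensorProduct.map (LinearMap.id : T →ₗ[k] T) (mul₃ k T))

/-- The left hand side `h_{1'} ⊗ h_{2'1} ⊗ h_{2'2}` of the Hopf brace compatibility
condition (2.1), i.e. `(id ⊗ Δ) ∘ Δ'`. -/
def braceLHS (H : Type*) [Ring H] [Algebra k H] (Δ Δ' : H →ₗ[k] H ⊗[k] H) :
    H →ₗ[k] H ⊗[k] (H ⊗[k] H) :=
  (TensorProduct.map (LinearMap.id : H →ₗ[k] H) Δ).comp Δ'

/-- The right hand side `h_{11'}S(h_2)h_{31'} ⊗ h_{12'} ⊗ h_{32'}` of the Hopf brace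
compatibility condition (2.1):  it is obtained from the twofold comultiplication
`h ↦ h_1 ⊗ (h_2 ⊗ h_3)` (using `Δ`) by applying `Δ'` to the first and third legs,
`S` to the middle leg, placing the results in the appropriate tensor positions of
`H ⊗ (H ⊗ H)` (filled with `1`s) and multiplying. -/
def braceRHS (H : Type*) [Ring H] [Algebra k H] (Δ Δ' : H →ₗ[k] H ⊗[k] H)
    (S : H →ₗ[k] H) : H →ₗ[k] H ⊗[k] (H ⊗[k] H) :=
  (mul₃ k (H ⊗[k] (H ⊗[k] H))).comp
    ((TensorProduct.map
        ((TensorProduct.map (LinearMap.id : H →ₗ[k] H) (ι₁ k H H)).comp Δ')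
        (TensorProduct.map ((ι₁ k H (H ⊗[k] H)).comp S)
          ((TensorProduct.map (LinearMap.id : H →ₗ[k] H) (ι₂ k H H)).comp Δ'))).comp
      ((TensorProduct.map (LinearMap.id : H →ₗ[k] H) Δ).comp Δ))

/-- A Hopf brace on the `k`-algebra `H` : two Hopf algebra structures sharing the
multiplication and unit of `H`, subject to the compatibility condition (2.1):
`h_{1'} ⊗ h_{2'1} ⊗ h_{2'2} = h_{11'}S(h_2)h_{31'} ⊗ h_{12'} ⊗ h_{32'}`. -/
structure HopfBrace (H : Type*) [Ring H] [Algebra k H] where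
  fst : HopfStruct k H
  snd : HopfStruct k H
  compat : ∀ h : H,
    braceLHS k H fst.Δ snd.Δ h = braceRHS k H fst.Δ snd.Δ fst.S h

/-- The coaction `ρ(h) = S(h_1) h_{21'} ⊗ h_{22'}` of Lemma 2.5. -/
def ρmap (H : Type*) [Ring H] [Algebra k H] (Δ Δ' : H →ₗ[k] H ⊗[k] H)
    (S : H →ₗ[k] H) : H →ₗ[k] H ⊗[k] H :=
  (LinearMap.mul' k (H ⊗[k] H)).comp
    ((TensorProduct.map ((ι₁ k H H).comp S) Δ').comp Δ)

/-- The coaction `φ(a) = (T(a_{1'}))_{(-1)} a_{2'} ⊗ (T(a_{1'}))_{(0)} a_{3'}`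
of Lemma 2.8(2), where `x_{(-1)} ⊗ x_{(0)} = ρ(x)`. -/
def φmap (H : Type*) [Ring H] [Algebra k H] (Δ Δ' : H →ₗ[k] H ⊗[k] H)
    (S T : H →ₗ[k] H) : H →ₗ[k] H ⊗[k] H :=
  (LinearMap.mul' k (H ⊗[k] H)).comp
    ((TensorProduct.map ((ρmap k H Δ Δ' S).comp T)
        (LinearMap.id : H ⊗[k] H →ₗ[k] H ⊗[k] H)).comp
      ((TensorProduct.map (LinearMap.id : H →ₗ[k] H) Δ').comp Δ'))

/-- `ρ : A →ₗ H ⊗ A` is a coassociative counital left coaction of the coalgebra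
`(H, ΔH, εH)`. -/
def LeftCoaction (A H : Type*) [Ring A] [Algebra k A] [Ring H] [Algebra k H]
    (ΔH : H →ₗ[k] H ⊗[k] H) (εH : H →ₗ[k] k) (ρ : A →ₗ[k] H ⊗[k] A) : Prop :=
  (∀ a : A,
    TensorProduct.map (LinearMap.id : H →ₗ[k] H) ρ (ρ a)
      = TensorProduct.assoc k H H A
          (TensorProduct.map ΔH (LinearMap.id : A →ₗ[k] A) (ρ a))) ∧
  (∀ a : A,
    TensorProduct.lid k A (TensorProduct.map εH (LinearMap.id : A →ₗ[k] A) (ρ a)) = a)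

/-- `φ : H →ₗ H ⊗ A` is a coassociative counital right coaction of the coalgebra
`(A, ΔA, εA)`. -/
def RightCoaction (A H : Type*) [Ring A] [Algebra k A] [Ring H] [Algebra k H]
    (ΔA : A →ₗ[k] A ⊗[k] A) (εA : A →ₗ[k] k) (φ : H →ₗ[k] H ⊗[k] A) : Prop :=
  (∀ h : H,
    TensorProduct.map (LinearMap.id : H →ₗ[k] H) ΔA (φ h)
      = TensorProduct.assoc k H A A
          (TensorProduct.map φ (LinearMap.id : A →ₗ[k] A) (φ h))) ∧
  (∀ h : H,
    TensorProduct.rid k H (TensorProduct.map (LinearMap.id : H →ₗ[k] H) εA (φ h)) = h)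

/-- a linear map which is moreover multiplicative and unital. -/
def IsAlgebraMorphism (M N : Type*) [Ring M] [Algebra k M] [Ring N] [Algebra k N]
    (f : M →ₗ[k] N) : Prop :=
  (∀ a b : M, f (a * b) = f a * f b) ∧ f 1 = 1

/-- `a ↦ a_{1(-1)} a_{2(-1)} ⊗ a_{1(0)} ⊗ a_{2(0)}`, the right hand side of the
comodule coalgebra condition. -/
def comodCoalgRHS (A H : Type*) [Ring A] [Algebra k A] [Ring H] [Algebra k H]
    (ΔA : A →ₗ[k] A ⊗[k] A) (ρ : A →ₗ[k] H ⊗[k] A) :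
    A →ₗ[k] H ⊗[k] (A ⊗[k] A) :=
  (LinearMap.mul' k (H ⊗[k] (A ⊗[k] A))).comp
    ((TensorProduct.map
        ((TensorProduct.map (LinearMap.id : H →ₗ[k] H) (ι₁ k A A)).comp ρ)
        ((TensorProduct.map (LinearMap.id : H →ₗ[k] H) (ι₂ k A A)).comp ρ)).comp ΔA)

/-- The two conditions making a left `H`-comodule `(A, ρ)` a comodule coalgebra:
`a_{(-1)} ⊗ Δ(a_{(0)}) = a_{1(-1)} a_{2(-1)} ⊗ a_{1(0)} ⊗ a_{2(0)}` and
`a_{(-1)} ε(a_{(0)}) = ε(a) 1`. -/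
def IsComodCoalg (A H : Type*) [Ring A] [Algebra k A] [Ring H] [Algebra k H]
    (ΔA : A →ₗ[k] A ⊗[k] A) (εA : A →ₗ[k] k) (ρ : A →ₗ[k] H ⊗[k] A) : Prop :=
  (∀ a : A,
    TensorProduct.map (LinearMap.id : H →ₗ[k] H) ΔA (ρ a)
      = comodCoalgRHS k A H ΔA ρ a) ∧
  (∀ a : A,
    TensorProduct.rid k H (TensorProduct.map (LinearMap.id : H →ₗ[k] H) εA (ρ a))
      = algebraMap k H (εA a))

/-- `a ↦ a_{1(-1)} a_{2(-1)[0]} ⊗ a_{1(0)} a_{2(-1)[1]} ⊗ a_{2(0)}`, the right hand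
side of (HM2). -/
def HM2RHS (A H : Type*) [Ring A] [Algebra k A] [Ring H] [Algebra k H]
    (ΔA : A →ₗ[k] A ⊗[k] A) (ρ : A →ₗ[k] H ⊗[k] A) (φ : H →ₗ[k] H ⊗[k] A) :
    A →ₗ[k] H ⊗[k] (A ⊗[k] A) :=
  (LinearMap.mul' k (H ⊗[k] (A ⊗[k] A))).comp
    ((TensorProduct.map
        ((TensorProduct.map (LinearMap.id : H →ₗ[k] H) (ι₁ k A A)).comp ρ)
        ((TensorProduct.assoc k H A A).toLinearMap.comp
          ((TensorProduct.map φ (LinearMap.id : A →ₗ[k] A)).comp ρ))).comp ΔA)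

/-- `h ↦ h_{1[0]} ⊗ h_{1[1](-1)} h_{2[0]} ⊗ h_{1[1](0)} h_{2[1]}`, the right hand
side of (HM3). -/
def HM3RHS (A H : Type*) [Ring A] [Algebra k A] [Ring H] [Algebra k H]
    (ΔH : H →ₗ[k] H ⊗[k] H) (ρ : A →ₗ[k] H ⊗[k] A) (φ : H →ₗ[k] H ⊗[k] A) :
    H →ₗ[k] H ⊗[k] (H ⊗[k] A) :=
  (LinearMap.mul' k (H ⊗[k] (H ⊗[k] A))).comp
    ((TensorProduct.map
        ((TensorProduct.map (LinearMap.id : H →ₗ[k] H) ρ).comp φ)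
        ((ι₂ k H (H ⊗[k] A)).comp φ)).comp ΔH)

/-- A Hopf matched pair `(A, H)` (Definition 3.1): `ρ` makes `A` a left
`H`-comodule algebra, `φ` makes `H` a right `A`-comodule algebra, and the
compatibility conditions (HM1)–(HM4) hold. -/
def IsHopfMatchedPair (A H : Type*) [Ring A] [Algebra k A] [Ring H] [Algebra k H]
    (ΔA : A →ₗ[k] A ⊗[k] A) (εA : A →ₗ[k] k)
    (ΔH : H →ₗ[k] H ⊗[k] H) (εH : H →ₗ[k] k)
    (ρ : A →ₗ[k] H ⊗[k] A) (φ : H →ₗ[k] H ⊗[k] A) : Prop :=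
  LeftCoaction k A H ΔH εH ρ ∧
  IsAlgebraMorphism k A (H ⊗[k] A) ρ ∧
  RightCoaction k A H ΔA εA φ ∧
  IsAlgebraMorphism k H (H ⊗[k] A) φ ∧
  -- (HM1)
  (∀ a : A,
    TensorProduct.rid k H (TensorProduct.map (LinearMap.id : H →ₗ[k] H) εA (ρ a))
      = algebraMap k H (εA a)) ∧
  (∀ h : H,
    TensorProduct.lid k A (TensorProduct.map εH (LinearMap.id : A →ₗ[k] A) (φ h))
      = algebraMap k A (εH h)) ∧
  -- (HM2)
  (∀ a : A,
    TensorProduct.map (LinearMap.id : H →ₗ[k] H) ΔA (ρ a) = HM2RHS k A H ΔA ρ φ a) ∧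
  -- (HM3)
  (∀ h : H,
    TensorProduct.assoc k H H A
        (TensorProduct.map ΔH (LinearMap.id : A →ₗ[k] A) (φ h))
      = HM3RHS k A H ΔH ρ φ h) ∧
  -- (HM4)
  (∀ (a : A) (h : H), φ h * ρ a = ρ a * φ h)

/-- Equation (3.2): `Δ(a) = a_{1'} T(a_{2'(-1)}) ⊗ a_{2'(0)}`. -/
def Δfromρ (A : Type*) [Ring A] [Algebra k A] (Δ' : A →ₗ[k] A ⊗[k] A)
    (T : A →ₗ[k] A) (ρ : A →ₗ[k] A ⊗[k] A) : A →ₗ[k] A ⊗[k] A :=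
  (LinearMap.mul' k (A ⊗[k] A)).comp
    ((TensorProduct.map (ι₁ k A A)
        ((TensorProduct.map T (LinearMap.id : A →ₗ[k] A)).comp ρ)).comp Δ')

/-- Equation (3.3): `S(a) = a_{(-1)} T(a_{(0)})`. -/
def Sfromρ (A : Type*) [Ring A] [Algebra k A] (T : A →ₗ[k] A)
    (ρ : A →ₗ[k] A ⊗[k] A) : A →ₗ[k] A :=
  (LinearMap.mul' k A).comp
    ((TensorProduct.map (LinearMap.id : A →ₗ[k] A) T).comp ρ)

/-- The comultiplication `Δ_R(h) = R · Δ(h) · R⁻¹` obtained by conjugating `Δ` with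
an invertible element `R ∈ H ⊗ H`. -/
def conjComul (H : Type*) [Ring H] [Algebra k H] (R Rinv : H ⊗[k] H)
    (Δ : H →ₗ[k] H ⊗[k] H) : H →ₗ[k] H ⊗[k] H :=
  (LinearMap.mulLeft k R).comp ((LinearMap.mulRight k Rinv).comp Δ)

/-- The braiding candidate `c(x ⊗ y) = x_{(-1)} y_{[0]} ⊗ x_{(0)} y_{[1]}` of
Proposition 2.9, i.e. `c = mult ∘ (ρ ⊗ φ)`. -/
def cmap (A : Type*) [Ring A] [Algebra k A] (Δ Δ' : A →ₗ[k] A ⊗[k] A)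
    (S T : A →ₗ[k] A) : A ⊗[k] A →ₗ[k] A ⊗[k] A :=
  (LinearMap.mul' k (A ⊗[k] A)).comp
    (TensorProduct.map (ρmap k A Δ Δ' S) (φmap k A Δ Δ' S T))

/-- `γ(x ⊗ y) = x y_{(-1)} ⊗ y_{(0)}` for a coaction `ρ(y) = y_{(-1)} ⊗ y_{(0)}`. -/
def γmap (A : Type*) [Ring A] [Algebra k A] (ρ : A →ₗ[k] A ⊗[k] A) :
    A ⊗[k] A →ₗ[k] A ⊗[k] A :=
  (LinearMap.mul' k (A ⊗[k] A)).comp (TensorProduct.map (ι₁ k A A) ρ)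

/-- `σ(x ⊗ y) = y_2 ⊗ x S(y_1) y_3`. -/
def σmap (A : Type*) [Ring A] [Algebra k A] (Δ : A →ₗ[k] A ⊗[k] A)
    (S : A →ₗ[k] A) : A ⊗[k] A →ₗ[k] A ⊗[k] A :=
  (mul₄ k (A ⊗[k] A)).comp
    ((TensorProduct.map (ι₂ k A A)
        (TensorProduct.map ((ι₂ k A A).comp S)
          (TensorProduct.map (ι₁ k A A) (ι₂ k A A)))).comp
      (TensorProduct.map (LinearMap.id : A →ₗ[k] A)
        ((TensorProduct.map (LinearMap.id : A →ₗ[k] A) Δ).comp Δ)))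

/-- The usual tensor product comultiplication `Δ̂` on `A ⊗ H`:
`a ⊗ h ↦ (a_1 ⊗ h_1) ⊗ (a_2 ⊗ h_2)`. -/
def hatΔ (A H : Type*) [Ring A] [Algebra k A] [Ring H] [Algebra k H]
    (ΔA : A →ₗ[k] A ⊗[k] A) (ΔH : H →ₗ[k] H ⊗[k] H) :
    A ⊗[k] H →ₗ[k] (A ⊗[k] H) ⊗[k] (A ⊗[k] H) :=
  (TensorProduct.tensorTensorTensorComm k A A H H).toLinearMap.comp
    (TensorProduct.map ΔA ΔH)

/-- The bicrossed coproduct comultiplication on `A ⊗ H`: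
`Δ̃(a ⊗ h) = a_1 ⊗ a_{2(-1)} h_{1[0]} ⊗ a_{2(0)} h_{1[1]} ⊗ h_2`. -/
def bicrossΔ (A H : Type*) [Ring A] [Algebra k A] [Ring H] [Algebra k H]
    (ΔA : A →ₗ[k] A ⊗[k] A) (ΔH : H →ₗ[k] H ⊗[k] H)
    (ρ : A →ₗ[k] H ⊗[k] A) (φ : H →ₗ[k] H ⊗[k] A) :
    A ⊗[k] H →ₗ[k] (A ⊗[k] H) ⊗[k] (A ⊗[k] H) :=
  (LinearMap.mul' k ((A ⊗[k] H) ⊗[k] (A ⊗[k] H))).comp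
    (TensorProduct.map
      -- a ↦ (a_1 ⊗ a_{2(-1)}) ⊗ (a_{2(0)} ⊗ 1)
      ((TensorProduct.map (LinearMap.id : A ⊗[k] H →ₗ[k] A ⊗[k] H) (ι₁ k A H)).comp
        ((TensorProduct.assoc k A H A).symm.toLinearMap.comp
          ((TensorProduct.map (LinearMap.id : A →ₗ[k] A) ρ).comp ΔA)))
      -- h ↦ (1 ⊗ h_{1[0]}) ⊗ (h_{1[1]} ⊗ h_2)
      ((TensorProduct.map (ι₂ k A H) (LinearMap.id : A ⊗[k] H →ₗ[k] A ⊗[k] H)).comp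
        ((TensorProduct.assoc k H A H).toLinearMap.comp
          ((TensorProduct.map φ (LinearMap.id : H →ₗ[k] H)).comp ΔH))))

/-- The antipode of the bicrossed coproduct:
`S̃(a ⊗ h) = S_A(h_{[1]}) S_A(a_{(0)}) ⊗ S_H(h_{[0]}) S_H(a_{(-1)})`. -/
def bicrossS (A H : Type*) [Ring A] [Algebra k A] [Ring H] [Algebra k H]
    (SA : A →ₗ[k] A) (SH : H →ₗ[k] H)
    (ρ : A →ₗ[k] H ⊗[k] A) (φ : H →ₗ[k] H ⊗[k] A) :
    A ⊗[k] H →ₗ[k] A ⊗[k] H :=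
  (LinearMap.mul' k (A ⊗[k] H)).comp
    ((TensorProduct.map
        ((TensorProduct.map SA SH).comp ((TensorProduct.comm k H A).toLinearMap.comp φ))
        ((TensorProduct.map SA SH).comp ((TensorProduct.comm k H A).toLinearMap.comp ρ))).comp
      (TensorProduct.comm k A H).toLinearMap)

/-- The left hand side `h_{[0]} ⊗ h_{[1]1} ⊗ h_{[1]2}` of equation (4.1), where the
`A`-leg is comultiplied with `Δ'`. -/
def eq41LHS (A H : Type*) [Ring A] [Algebra k A] [Ring H] [Algebra k H]
    (Δ'A : A →ₗ[k] A ⊗[k] A) (φ : H →ₗ[k] H ⊗[k] A) :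
    H →ₗ[k] H ⊗[k] (A ⊗[k] A) :=
  (TensorProduct.map (LinearMap.id : H →ₗ[k] H) Δ'A).comp φ

/-- The right hand side `h_{1[0]} S(h_2) h_{3[0]} ⊗ h_{1[1]} ⊗ h_{3[1]}` of
equation (4.1). -/
def eq41RHS (A H : Type*) [Ring A] [Algebra k A] [Ring H] [Algebra k H]
    (ΔH : H →ₗ[k] H ⊗[k] H) (SH : H →ₗ[k] H) (φ : H →ₗ[k] H ⊗[k] A) :
    H →ₗ[k] H ⊗[k] (A ⊗[k] A) :=
  (mul₃ k (H ⊗[k] (A ⊗[k] A))).comp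
    ((TensorProduct.map
        ((TensorProduct.map (LinearMap.id : H →ₗ[k] H) (ι₁ k A A)).comp φ)
        (TensorProduct.map ((ι₁ k H (A ⊗[k] A)).comp SH)
          ((TensorProduct.map (LinearMap.id : H →ₗ[k] H) (ι₂ k A A)).comp φ))).comp
      ((TensorProduct.map (LinearMap.id : H →ₗ[k] H) ΔH).comp ΔH))

/-- `x ↦ x_{11'} S(x_2) ⊗ x_{12'} ⊗ 1 ∈ H ⊗ (H ⊗ A)`, an auxiliary map for
equations (4.2) and (4.3). -/
def LHmap (A H : Type*) [Ring A] [Algebra k A] [Ring H] [Algebra k H]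
    (ΔH Δ'H : H →ₗ[k] H ⊗[k] H) (SH : H →ₗ[k] H) :
    H →ₗ[k] H ⊗[k] (H ⊗[k] A) :=
  (LinearMap.mul' k (H ⊗[k] (H ⊗[k] A))).comp
    ((TensorProduct.map
        ((TensorProduct.map (LinearMap.id : H →ₗ[k] H) (ι₁ k H A)).comp Δ'H)
        ((ι₁ k H (H ⊗[k] A)).comp SH)).comp ΔH)

/-- The right hand side
`a_{(-1)11'} S(a_{(-1)2}) a_{(0)(-1)'} ⊗ a_{(-1)12'} ⊗ a_{(0)(0)'}` of
equation (4.2). -/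
def eq42RHS (A H : Type*) [Ring A] [Algebra k A] [Ring H] [Algebra k H]
    (ΔH Δ'H : H →ₗ[k] H ⊗[k] H) (SH : H →ₗ[k] H)
    (ρ ρ' : A →ₗ[k] H ⊗[k] A) :
    A →ₗ[k] H ⊗[k] (H ⊗[k] A) :=
  (LinearMap.mul' k (H ⊗[k] (H ⊗[k] A))).comp
    ((TensorProduct.map (LHmap k A H ΔH Δ'H SH)
        ((TensorProduct.map (LinearMap.id : H →ₗ[k] H) (ι₂ k H A)).comp ρ')).comp ρ)

/-- The right hand side
`h_{1[0]11'} S(h_{1[0]2}) h_{1[1](-1)'} h_2 ⊗ h_{1[0]12'} ⊗ h_{1[1](0)'}` of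
equation (4.3). -/
def eq43RHS (A H : Type*) [Ring A] [Algebra k A] [Ring H] [Algebra k H]
    (ΔH Δ'H : H →ₗ[k] H ⊗[k] H) (SH : H →ₗ[k] H)
    (ρ' : A →ₗ[k] H ⊗[k] A) (φ : H →ₗ[k] H ⊗[k] A) :
    H →ₗ[k] H ⊗[k] (H ⊗[k] A) :=
  (LinearMap.mul' k (H ⊗[k] (H ⊗[k] A))).comp
    ((TensorProduct.map
        ((LinearMap.mul' k (H ⊗[k] (H ⊗[k] A))).comp
          ((TensorProduct.map (LHmap k A H ΔH Δ'H SH)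
              ((TensorProduct.map (LinearMap.id : H →ₗ[k] H) (ι₂ k H A)).comp ρ')).comp φ))
        (ι₁ k H (H ⊗[k] A))).comp ΔH)

/-!
For a commutative Hopf brace `A` and a commutative algebra `R`, the two convolution products make
`Alg(A, R)` a skew brace: the Hopf brace compatibility, evaluated at points, is the skew brace
axiom. By Yoneda, elements of `A ⊗ A` are separated by pairs of points, and `γ`, `c`, `σ` transpose
to the maps `(a, b) ↦ (a, λ_a(b))`, the Yang–Baxter map of the skew brace, and
`(a, b) ↦ (b, b⁻¹ab)`. The theorem becomes the fact that the first map is a bijection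
intertwining the other two, which holds because `λ_a(a⁻ ⊚ b) = a⁻¹b`, where `a⁻`
is the `⊚`-inverse of `a`.
-/

open Algebra.TensorProduct (productMap productMap_apply_tmul productMap_left_apply
  productMap_right_apply includeLeft includeRight)

/-- The braiding `(a, b) ↦ (b, b⁻¹ab)` of a group. On points it is the transpose of `σ`. -/
def conjBraid {G : Type*} [Group G] (p : G × G) : G × G := (p.2, p.2⁻¹ * (p.1 * p.2))

/-- A skew (left) brace: a group with a second group structure `⊚`, kept in the field `circle`
so that the notation `*` and `⁻¹` refers to the first one, such that
`a ⊚ (bc) = (a ⊚ b) a⁻¹ (a ⊚ c)`. -/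
class SkewBrace (G : Type*) extends Group G where
  circle : Group G
  circle_mul : ∀ a b c : G,
    circle.mul a (b * c) = circle.mul a b * a⁻¹ * circle.mul a c

namespace SkewBrace

variable {G : Type*} [SkewBrace G]

/-- The circle product of a skew brace. -/
def circ (a b : G) : G := circle.mul a b

local infixl:70 " ⊚ " => circ

/-- The inverse for the circle product. -/
def circInv (a : G) : G := circle.inv a

lemma circ_assoc (a b c : G) : a ⊚ b ⊚ c = a ⊚ (b ⊚ c) := circle.mul_assoc a b c

lemma circ_mul (a b c : G) : a ⊚ (b * c) = (a ⊚ b) * a⁻¹ * (a ⊚ c) := circle_mul a b c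

lemma circ_one (a : G) : a ⊚ 1 = a := by
  have h := circ_mul a 1 1
  rw [mul_one, mul_assoc, left_eq_mul, inv_mul_eq_one] at h
  exact h.symm

lemma circle_one_eq_one : (circle.one : G) = 1 :=
  (circ_one _).symm.trans (circle.one_mul 1)

lemma one_circ (a : G) : 1 ⊚ a = a := by
  rw [← circle_one_eq_one]
  exact circle.one_mul a

lemma circInv_circ (a : G) : circInv a ⊚ a = 1 :=
  (circle.inv_mul_cancel a).trans circle_one_eq_one

lemma circ_circInv (a : G) : a ⊚ circInv a = 1 :=
  (@mul_inv_cancel G circle a).trans circle_one_eq_one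

/-- The action `λ_a(b) = a⁻¹(a ⊚ b)` of a skew brace on its first group. -/
def lam (a : G) : G →* G :=
  MonoidHom.mk' (fun b => a⁻¹ * (a ⊚ b)) fun b c => by
    rw [circ_mul]
    group

lemma lam_apply (a b : G) : lam a b = a⁻¹ * (a ⊚ b) := rfl

lemma mul_lam (a b : G) : a * lam a b = a ⊚ b := mul_inv_cancel_left a _

lemma lam_one (b : G) : lam 1 b = b := by
  rw [lam_apply, one_circ, inv_one, one_mul]

lemma lam_circ (a b c : G) : lam (a ⊚ b) c = lam a (lam b c) := by
  rw [lam_apply b, map_mul, map_inv, lam_apply, lam_apply, lam_apply, circ_assoc]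
  group

lemma lam_circInv_lam (a b : G) : lam (circInv a) (lam a b) = b := by
  rw [← lam_circ, circInv_circ, lam_one]

lemma lam_lam_circInv (a b : G) : lam a (lam (circInv a) b) = b := by
  rw [← lam_circ, circ_circInv, lam_one]

/-- The shear `(a, b) ↦ (a, λ_a(b))`. On points it is the transpose of `γ`. -/
def shear : G × G ≃ G × G where
  toFun p := (p.1, lam p.1 p.2)
  invFun p := (p.1, lam (circInv p.1) p.2)
  left_inv p := by simp only [lam_circInv_lam]
  right_inv p := by simp only [lam_lam_circInv]

/-- The Yang–Baxter map of a skew brace: `braid (a, b) = (a', b')` with `a' = λ_a(b)` and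
`a' ⊚ b' = a ⊚ b`. On points it is the transpose of `c`. -/
def braid (p : G × G) : G × G :=
  (lam p.1 p.2, circInv (lam p.1 p.2) ⊚ (p.1 ⊚ p.2))

lemma shear_braid (p : G × G) : shear (braid p) = conjBraid (shear p) := by
  have h : lam (lam p.1 p.2) (circInv (lam p.1 p.2) ⊚ (p.1 ⊚ p.2)) =
      (lam p.1 p.2)⁻¹ * (p.1 * lam p.1 p.2) := by
    rw [lam_apply (lam p.1 p.2), ← circ_assoc, circ_circInv, one_circ, mul_lam]
  exact Prod.ext rfl h

lemma shear_braid_shear_symm (p : G × G) : shear (braid (shear.symm p)) = conjBraid p := by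
  rw [shear_braid, Equiv.apply_symm_apply]

end SkewBrace

section ProductMap

variable {K : Type*} [CommSemiring K] {A B C D R : Type*} [Semiring A] [Algebra K A]
  [Semiring B] [Algebra K B] [Semiring C] [Algebra K C] [Semiring D] [Algebra K D]
  [CommSemiring R] [Algebra K R]

lemma productMap_map {f : B →ₐ[K] R} {g : D →ₐ[K] R} {f' : A →ₐ[K] R} {g' : C →ₐ[K] R}
    {u : A →ₗ[K] B} {v : C →ₗ[K] D} (hu : ∀ x, f (u x) = f' x) (hv : ∀ y, g (v y) = g' y)
    (t : A ⊗[K] C) :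
    productMap f g (TensorProduct.map u v t) = productMap f' g' t := by
  induction t with
  | zero => simp only [map_zero]
  | tmul x y => rw [TensorProduct.map_tmul, productMap_apply_tmul, productMap_apply_tmul, hu, hv]
  | add x y hx hy => simp only [map_add, hx, hy]

lemma productMap_self (f : A →ₐ[K] R) (t : A ⊗[K] A) :
    productMap f f t = f (LinearMap.mul' K A t) := by
  induction t with
  | zero => simp only [map_zero]
  | tmul x y => rw [productMap_apply_tmul, LinearMap.mul'_apply, map_mul]
  | add x y hx hy => simp only [map_add, hx, hy]

lemma algHom_mul'_map {P : B →ₐ[K] R} {f : A →ₐ[K] R} {g : C →ₐ[K] R} {u : A →ₗ[K] B}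
    {v : C →ₗ[K] B} (hu : ∀ x, P (u x) = f x) (hv : ∀ y, P (v y) = g y) (t : A ⊗[K] C) :
    P (LinearMap.mul' K B (TensorProduct.map u v t)) = productMap f g t := by
  rw [← productMap_self, productMap_map hu hv]

/-- The `R`-point of `A ⊗ A` given by a pair of `R`-points of `A`. -/
abbrev pairPoint (p : (A →ₐ[K] R) × (A →ₐ[K] R)) : A ⊗[K] A →ₐ[K] R := productMap p.1 p.2

/-- Yoneda: it suffices to test on the universal pair of points. -/
lemma eq_of_forall_pairPoint_eq {A : Type*} [CommSemiring A] [Algebra K A] {x y : A ⊗[K] A}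
    (h : ∀ p : (A →ₐ[K] A ⊗[K] A) × (A →ₐ[K] A ⊗[K] A), pairPoint p x = pairPoint p y) :
    x = y := by
  have pairPoint_universal : pairPoint (includeLeft, includeRight) = AlgHom.id K (A ⊗[K] A) := by
    ext <;> simp
  simpa only [pairPoint_universal, AlgHom.id_apply] using h (includeLeft, includeRight)

end ProductMap

section Points

variable {k}
variable {A R : Type*} [CommRing A] [Algebra k A] [CommSemiring R] [Algebra k R]

namespace HopfStruct

variable (D : HopfStruct k A)

/-- The Mathlib Hopf algebra associated with a `HopfStruct`. -/
abbrev toHopfAlgebra : HopfAlgebra k A :=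
  letI : Coalgebra k A :=
    { comul := D.Δ
      counit := D.ε
      coassoc := LinearMap.ext fun a => (D.coassoc a).symm
      rTensor_counit_comp_comul := LinearMap.ext fun a =>
        (TensorProduct.lid k A).injective <| (D.counit_left a).trans (by simp)
      lTensor_counit_comp_comul := LinearMap.ext fun a =>
        (TensorProduct.rid k A).injective <| (D.counit_right a).trans (by simp) }
  letI : Bialgebra k A :=
    Bialgebra.mk' k A D.counit_one (D.counit_mul _ _) D.comul_one (D.comul_mul _ _)
  { antipode := D.S
    mul_antipode_rTensor_comul := LinearMap.ext D.antipode_left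
    mul_antipode_lTensor_comul := LinearMap.ext D.antipode_right }

variable (R) in
/-- The convolution monoid of `R`-points of `A` with respect to `D`. -/
abbrev pointsMonoid : Monoid (A →ₐ[k] R) :=
  letI := D.toHopfAlgebra
  (WithConv.equiv (A →ₐ[k] R)).symm.monoid

lemma mul_apply (f g : A →ₐ[k] R) (a : A) :
    letI := D.pointsMonoid R
    (f * g) a = productMap f g (D.Δ a) :=
  letI := D.toHopfAlgebra
  AlgHom.convMul_apply (WithConv.toConv f) (WithConv.toConv g) a

lemma antipode_mul_cancel (f : A →ₐ[k] R) :
    letI := D.toHopfAlgebra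
    letI := D.pointsMonoid R
    f.comp (HopfAlgebra.antipodeAlgHom k A) * f = 1 := by
  let _ := D.toHopfAlgebra
  let _ := D.pointsMonoid R
  ext a
  calc (f.comp (HopfAlgebra.antipodeAlgHom k A) * f) a
      = productMap (f.comp (HopfAlgebra.antipodeAlgHom k A)) f (D.Δ a) := D.mul_apply _ _ a
    _ = f (LinearMap.mul' k A (TensorProduct.map D.S LinearMap.id (D.Δ a))) :=
        (algHom_mul'_map (fun _ => rfl) (fun _ => rfl) _).symm
    _ = algebraMap k R (D.ε a) := by rw [D.antipode_left, f.commutes]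

variable (R) in
/-- The convolution group of `R`-points of `A` with respect to `D`, in which inversion is
precomposition with the antipode. Mathlib's `AlgHom.convGroup` asks for a bialgebra structure
on `R`. -/
abbrev pointsGroup : Group (A →ₐ[k] R) :=
  letI := D.toHopfAlgebra
  { D.pointsMonoid R with
    inv := fun f => f.comp (HopfAlgebra.antipodeAlgHom k A)
    inv_mul_cancel := D.antipode_mul_cancel }

lemma algHom_mul₃_map_comul {B : Type*} [Ring B] [Algebra k B] {P : B →ₐ[k] R}
    {f g h : A →ₐ[k] R} {u v w : A →ₗ[k] B} (hu : ∀ x, P (u x) = f x)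
    (hv : ∀ x, P (v x) = g x) (hw : ∀ x, P (w x) = h x) (a : A) :
    letI := D.pointsMonoid R
    P (mul₃ k B (TensorProduct.map u (TensorProduct.map v w)
      (TensorProduct.map LinearMap.id D.Δ (D.Δ a)))) = (f * (g * h)) a := by
  let _ := D.pointsMonoid R
  have hvw (y : A) : P (LinearMap.mul' k B (TensorProduct.map v w (D.Δ y))) = (g * h) y := by
    rw [algHom_mul'_map hv hw, D.mul_apply]
  rw [D.mul_apply, mul₃, LinearMap.comp_apply, TensorProduct.map_map, TensorProduct.map_map]
  exact algHom_mul'_map hu hvw _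

end HopfStruct

namespace HopfBrace

variable (HB : HopfBrace k A)

lemma points_mul_compat (f g h : A →ₐ[k] R) :
    letI := HB.fst.pointsGroup R
    (HB.snd.pointsGroup R).mul f (g * h) =
      (HB.snd.pointsGroup R).mul f g * f⁻¹ * (HB.snd.pointsGroup R).mul f h := by
  let _ := HB.fst.pointsGroup R
  ext a
  have hfg (x : A) : productMap f (productMap g h)
      (TensorProduct.map LinearMap.id (ι₁ k A A) (HB.snd.Δ x)) =
        (HB.snd.pointsGroup R).mul f g x :=
    (productMap_map (fun _ => rfl) (fun y => productMap_left_apply g h y) _).trans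
      (HB.snd.mul_apply f g x).symm
  have hfh (x : A) : productMap f (productMap g h)
      (TensorProduct.map LinearMap.id (ι₂ k A A) (HB.snd.Δ x)) =
        (HB.snd.pointsGroup R).mul f h x :=
    (productMap_map (fun _ => rfl) (fun y => productMap_right_apply g h y) _).trans
      (HB.snd.mul_apply f h x).symm
  have hf (x : A) : productMap f (productMap g h) (ι₁ k A (A ⊗[k] A) (HB.fst.S x)) = f⁻¹ x :=
    productMap_left_apply f _ _
  calc (HB.snd.pointsGroup R).mul f (g * h) a
      = productMap f (g * h) (HB.snd.Δ a) := HB.snd.mul_apply f (g * h) a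
    _ = productMap f (productMap g h) (braceLHS k A HB.fst.Δ HB.snd.Δ a) :=
        (productMap_map (fun _ => rfl) (fun y => (HB.fst.mul_apply g h y).symm) _).symm
    _ = productMap f (productMap g h) (braceRHS k A HB.fst.Δ HB.snd.Δ HB.fst.S a) := by
        rw [HB.compat]
    _ = ((HB.snd.pointsGroup R).mul f g * (f⁻¹ * (HB.snd.pointsGroup R).mul f h)) a :=
        HB.fst.algHom_mul₃_map_comul hfg hf hfh a
    _ = _ := by rw [mul_assoc]

variable (R) in
/-- The skew brace of `R`-points of a commutative Hopf brace. -/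
abbrev points : SkewBrace (A →ₐ[k] R) :=
  { HB.fst.pointsGroup R with
    circle := HB.snd.pointsGroup R
    circle_mul := HB.points_mul_compat }

open SkewBrace

lemma circ_apply (f g : A →ₐ[k] R) (a : A) :
    letI := HB.points R
    circ f g a = productMap f g (HB.snd.Δ a) :=
  HB.snd.mul_apply f g a

variable (p : (A →ₐ[k] R) × (A →ₐ[k] R))

lemma pairPoint_ρmap (a : A) :
    letI := HB.points R
    pairPoint p (ρmap k A HB.fst.Δ HB.snd.Δ HB.fst.S a) = lam p.1 p.2 a := by
  let _ := HB.points R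
  have hinv (x : A) : pairPoint p (ι₁ k A A (HB.fst.S x)) = p.1⁻¹ x :=
    productMap_left_apply p.1 p.2 _
  exact (algHom_mul'_map hinv (fun x => (HB.circ_apply p.1 p.2 x).symm) _).trans
    (HB.fst.mul_apply _ _ a).symm

lemma pairPoint_map_antipode_ρmap (a : A) :
    letI := HB.points R
    pairPoint p (((TensorProduct.map HB.snd.S LinearMap.id).comp
      (ρmap k A HB.fst.Δ HB.snd.Δ HB.fst.S)) a) = lam (circInv p.1) p.2 a := by
  let _ := HB.points R
  exact (productMap_map (f' := circInv p.1) (fun _ => rfl) (fun _ => rfl) _).trans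
    (HB.pairPoint_ρmap (circInv p.1, p.2) a)

lemma pairPoint_φmap (a : A) :
    letI := HB.points R
    pairPoint p (φmap k A HB.fst.Δ HB.snd.Δ HB.fst.S HB.snd.S a) =
      circ (circInv (lam p.1 p.2)) (circ p.1 p.2) a := by
  let _ := HB.points R
  have hinv (x : A) : pairPoint p (ρmap k A HB.fst.Δ HB.snd.Δ HB.fst.S (HB.snd.S x)) =
      circInv (lam p.1 p.2) x :=
    HB.pairPoint_ρmap p _
  rw [φmap, LinearMap.comp_apply, LinearMap.comp_apply, LinearMap.comp_apply,
    TensorProduct.map_map]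
  exact (algHom_mul'_map hinv (fun x => (HB.circ_apply p.1 p.2 x).symm) _).trans
    (HB.circ_apply _ _ a).symm

lemma pairPoint_γmap (z : A ⊗[k] A) :
    letI := HB.points R
    pairPoint p (γmap k A (ρmap k A HB.fst.Δ HB.snd.Δ HB.fst.S) z) = pairPoint (shear p) z :=
  algHom_mul'_map (productMap_left_apply p.1 p.2) (HB.pairPoint_ρmap p) z

lemma pairPoint_γmap_antipode (z : A ⊗[k] A) :
    letI := HB.points R
    pairPoint p (γmap k A ((TensorProduct.map HB.snd.S LinearMap.id).comp
      (ρmap k A HB.fst.Δ HB.snd.Δ HB.fst.S)) z) = pairPoint (shear.symm p) z :=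
  algHom_mul'_map (productMap_left_apply p.1 p.2) (HB.pairPoint_map_antipode_ρmap p) z

lemma pairPoint_cmap (z : A ⊗[k] A) :
    letI := HB.points R
    pairPoint p (cmap k A HB.fst.Δ HB.snd.Δ HB.fst.S HB.snd.S z) = pairPoint (braid p) z :=
  algHom_mul'_map (HB.pairPoint_ρmap p) (HB.pairPoint_φmap p) z

lemma pairPoint_σmap (z : A ⊗[k] A) :
    letI := HB.points R
    pairPoint p (σmap k A HB.fst.Δ HB.fst.S z) = pairPoint (conjBraid p) z := by
  let _ := HB.points R
  rw [σmap, mul₄, LinearMap.comp_apply, LinearMap.comp_apply, LinearMap.comp_apply,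
    TensorProduct.map_map, TensorProduct.map_map]
  exact algHom_mul'_map (productMap_right_apply p.1 p.2)
    (HB.fst.algHom_mul₃_map_comul (f := p.2⁻¹) (fun _ => productMap_right_apply p.1 p.2 _)
      (productMap_left_apply p.1 p.2) (productMap_right_apply p.1 p.2)) z

end HopfBrace

end Points

/-- from the proof of Proposition 2.9.  Let `(A, Δ, Δ')` be a
commutative Hopf brace, `ρ(x) = S(x_1) x_{21'} ⊗ x_{22'}`,
`φ(y) = (T(y_{1'}))_{(-1)} y_{2'} ⊗ (T(y_{1'}))_{(0)} y_{3'}`,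
`c(x ⊗ y) = x_{(-1)} y_{[0]} ⊗ x_{(0)} y_{[1]}` and
`γ(x ⊗ y) = x y_{(-1)} ⊗ y_{(0)}`.  Then `γ` is bijective with inverse
`γ⁻¹(x ⊗ y) = x T(y_{(-1)}) ⊗ y_{(0)}`, and `γ⁻¹ ∘ c ∘ γ = σ`, where
`σ(x ⊗ y) = y_2 ⊗ x S(y_1) y_3`. -/
theorem gamma_conjugation {k : Type*} [Field k] {A : Type*} [Ring A] [Algebra k A]
    (HB : HopfBrace k A) (hcomm : ∀ x y : A, x * y = y * x) :
    (∀ z : A ⊗[k] A,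
      γmap k A (ρmap k A HB.fst.Δ HB.snd.Δ HB.fst.S)
        (γmap k A
          ((TensorProduct.map HB.snd.S (LinearMap.id : A →ₗ[k] A)).comp
            (ρmap k A HB.fst.Δ HB.snd.Δ HB.fst.S)) z) = z) ∧
    (∀ z : A ⊗[k] A,
      γmap k A
        ((TensorProduct.map HB.snd.S (LinearMap.id : A →ₗ[k] A)).comp
          (ρmap k A HB.fst.Δ HB.snd.Δ HB.fst.S))
        (γmap k A (ρmap k A HB.fst.Δ HB.snd.Δ HB.fst.S) z) = z) ∧
    (∀ z : A ⊗[k] A,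
      γmap k A
        ((TensorProduct.map HB.snd.S (LinearMap.id : A →ₗ[k] A)).comp
          (ρmap k A HB.fst.Δ HB.snd.Δ HB.fst.S))
        (cmap k A HB.fst.Δ HB.snd.Δ HB.fst.S HB.snd.S
          (γmap k A (ρmap k A HB.fst.Δ HB.snd.Δ HB.fst.S) z))
      = σmap k A HB.fst.Δ HB.fst.S z) := by
  let _ : CommRing A := { ‹Ring A› with mul_comm := hcomm }
  let _ : SkewBrace (A →ₐ[k] A ⊗[k] A) := HB.points (A ⊗[k] A)
  refine ⟨fun z => eq_of_forall_pairPoint_eq fun p => ?_,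
    fun z => eq_of_forall_pairPoint_eq fun p => ?_,
    fun z => eq_of_forall_pairPoint_eq fun p => ?_⟩
  · rw [HB.pairPoint_γmap, HB.pairPoint_γmap_antipode, Equiv.symm_apply_apply]
  · rw [HB.pairPoint_γmap_antipode, HB.pairPoint_γmap, Equiv.apply_symm_apply]
  · rw [HB.pairPoint_γmap_antipode, HB.pairPoint_cmap, HB.pairPoint_γmap,
      SkewBrace.shear_braid_shear_symm, HB.pairPoint_σmap]

end HopfPaper
end
end

section
/- Let (A, Δ', ε) be a commutative Hopf algebra over a field k with antipode T, and suppose (A, A) is a Hopf matched pair (with both Hopf algebra structures given by Δ') with coactions ρ(a) = a_{(-1)} ⊗ a_{(0)} and φ(a) = a_{[0]} ⊗ a_{[1]}, such that a_{1'} ⊗ a_{2'} = a_{1'(-1)} a_{2'[0]} ⊗ a_{1'(0)} a_{2'[1]} for all a ∈ A. Define Δ(a) = a_{1'} T(a_{2'(-1)}) ⊗ a_{2'(0)} and S(a) = a_{(-1)} T(a_{(0)}). Then (A, m, 1, Δ, ε, S) is a Hopf algebra and (A, Δ, Δ') is a commutative Hopf brace. -/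
open TensorProduct

noncomputable section

namespace HopfPaper

variable (k : Type*) [Field k]

/-!
A commutative Hopf algebra `A` represents the group-valued functor sending a commutative algebra
`R` to the algebra maps `A → R`, so algebra maps `A → A ⊗ A` can be compared through the binary
operations they induce on points. On points, `ρ` and `φ` become maps `l` and `r` with
`x * y = l x y * r x y`, where `l` is an action and `l x (y * z) = l x y * l (r x y) z`. Such a
pair turns the group into a skew brace: `x ∘ y = x * l x⁻¹ y` is a second group law, characterised
by `x ∘ l x y = x * y`, in which the inverse of `x` is `x̄ = l x x⁻¹`. The formulas for `Δ` and `S`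
are `∘` and `x ↦ x̄` read on points, and the compatibility condition (2.1) is the skew brace law
`x * (y ∘ z) = (x * y) ∘ x̄ ∘ (x * z)`.
-/

section BraidedPair

/-- Maps `l` and `r` describing a matched pair of a group with itself whose multiplication is
braided commutative, `x * y = l x y * r x y`. Of the matched pair axioms only the ones for `l` are
recorded: `r` is determined by `l`. -/
structure IsBraidedPair {G : Type*} [Group G] (l r : G → G → G) : Prop where
  one_left : ∀ x, l 1 x = x
  left_one : ∀ x, l x 1 = 1
  mul_left : ∀ x y z, l (x * y) z = l x (l y z)
  left_mul : ∀ x y z, l x (y * z) = l x y * l (r x y) z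
  braided : ∀ x y, x * y = l x y * r x y

/-- The operation `x ∘ y = x * l x⁻¹ y`, the second group law of the skew brace attached to a
left action `l` of a group on itself. -/
def circ {G : Type*} [Group G] (l : G → G → G) (x y : G) : G := x * l x⁻¹ y

namespace IsBraidedPair

variable {G : Type*} [Group G] {l r : G → G → G} (h : IsBraidedPair l r)
include h

lemma right_mul_inv (x y : G) : r x y * y⁻¹ = (l x y)⁻¹ * x := by
  rw [eq_inv_mul_iff_mul_eq, ← mul_assoc, ← h.braided, mul_inv_cancel_right]

lemma one_circ (x : G) : circ l 1 x = x := by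
  rw [circ, inv_one, h.one_left, one_mul]

lemma circ_one (x : G) : circ l x 1 = x := by
  rw [circ, h.left_one, mul_one]

lemma circ_left (x y : G) : circ l x (l x y) = x * y := by
  rw [circ, ← h.mul_left, inv_mul_cancel, h.one_left]

lemma circ_assoc (x y z : G) : circ l (circ l x y) z = circ l x (circ l y z) := by
  have hinv : (x * l x⁻¹ y)⁻¹ = r x⁻¹ y * y⁻¹ := by rw [mul_inv_rev, h.right_mul_inv]
  simp only [circ]
  rw [hinv, h.mul_left, h.left_mul, mul_assoc]

lemma circ_left_inv (x : G) : circ l x (l x x⁻¹) = 1 := by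
  rw [h.circ_left, mul_inv_cancel]

lemma left_inv_circ (x : G) : circ l (l x x⁻¹) x = 1 := by
  have hinv : (l x x⁻¹)⁻¹ = r x x⁻¹ :=
    inv_eq_of_mul_eq_one_right (by rw [← h.braided, mul_inv_cancel])
  rw [circ, hinv, ← h.left_mul, inv_mul_cancel, h.left_one]

lemma left_circ (x y z : G) : l x (circ l y z) = circ l (l x y) (l x z) := by
  simp only [circ]
  rw [h.left_mul, ← h.mul_left, h.right_mul_inv, h.mul_left]

lemma mul_circ (x y z : G) :
    x * circ l y z = circ l (x * y) (circ l (l x x⁻¹) (x * z)) :=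
  calc
    x * circ l y z = circ l (circ l x (l x y)) (l x z) := by
      rw [← h.circ_left, h.left_circ, h.circ_assoc]
    _ = circ l (x * y) (circ l (circ l (l x x⁻¹) x) (l x z)) := by
      rw [h.circ_left, h.left_inv_circ, h.one_circ]
    _ = circ l (x * y) (circ l (l x x⁻¹) (x * z)) := by
      rw [h.circ_assoc, h.circ_left]

end IsBraidedPair

end BraidedPair

section ProductMap

open Algebra.TensorProduct

variable {K A B C D R R' : Type*} [CommSemiring K]
  [Semiring A] [Algebra K A] [Semiring B] [Algebra K B] [Semiring C] [Algebra K C]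
  [Semiring D] [Algebra K D] [CommSemiring R] [Algebra K R] [CommSemiring R'] [Algebra K R']

lemma productMap_comp_map (x : C →ₐ[K] R) (y : D →ₐ[K] R) (f : A →ₐ[K] C) (g : B →ₐ[K] D) :
    (productMap x y).comp (map f g) = productMap (x.comp f) (y.comp g) := by
  ext <;> simp

lemma comp_productMap (f : R →ₐ[K] R') (x : A →ₐ[K] R) (y : B →ₐ[K] R) :
    f.comp (productMap x y) = productMap (f.comp x) (f.comp y) := by
  ext <;> simp

lemma productMap_comp_assoc (x : A →ₐ[K] R) (y : B →ₐ[K] R) (z : C →ₐ[K] R) :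
    (productMap x (productMap y z)).comp (Algebra.TensorProduct.assoc K K K A B C).toAlgHom =
      productMap (productMap x y) z := by
  ext <;> simp [one_def]

lemma toLinearMap_productMap (x : A →ₐ[K] R) (y : B →ₐ[K] R) :
    (productMap x y).toLinearMap =
      LinearMap.mul' K R ∘ₗ TensorProduct.map x.toLinearMap y.toLinearMap :=
  TensorProduct.ext' fun _ _ ↦ rfl

lemma eq_productMap_comp_iff {f : C →ₐ[K] R} {x : A →ₐ[K] R} {y : B →ₐ[K] R}
    {g : C →ₐ[K] A ⊗[K] B} :
    f = (productMap x y).comp g ↔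
      f.toLinearMap =
        LinearMap.mul' K R ∘ₗ TensorProduct.map x.toLinearMap y.toLinearMap ∘ₗ g.toLinearMap := by
  rw [← AlgHom.toLinearMap_injective.eq_iff, AlgHom.comp_toLinearMap, toLinearMap_productMap,
    LinearMap.comp_assoc]

lemma lid_comp_map_id {A : Type*} [CommSemiring A] [Algebra K A] (ε : B →ₐ[K] K) :
    (Algebra.TensorProduct.lid K A).toAlgHom.comp (map ε (.id K A)) =
      productMap ((Algebra.ofId K A).comp ε) (.id K A) := by
  ext <;> simp [Algebra.ofId_apply, Algebra.algebraMap_eq_smul_one]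

lemma rid_comp_map_id {A : Type*} [CommSemiring A] [Algebra K A] (ε : B →ₐ[K] K) :
    (Algebra.TensorProduct.rid K K A).toAlgHom.comp (map (.id K A) ε) =
      productMap (.id K A) ((Algebra.ofId K A).comp ε) := by
  ext <;> simp [Algebra.ofId_apply, Algebra.algebraMap_eq_smul_one]

universe u

variable {A₁ A₂ A₃ : Type u} [CommSemiring A₁] [Algebra K A₁] [CommSemiring A₂] [Algebra K A₂]
  [CommSemiring A₃] [Algebra K A₃]

lemma algHom_tensor_tensor_ext {f g : D →ₐ[K] A₁ ⊗[K] (A₂ ⊗[K] A₃)}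
    (h : ∀ (R : Type u) [CommSemiring R] [Algebra K R]
      (x : A₁ →ₐ[K] R) (y : A₂ →ₐ[K] R) (z : A₃ →ₐ[K] R),
      (productMap x (productMap y z)).comp f = (productMap x (productMap y z)).comp g) :
    f = g := by
  let i : A₂ ⊗[K] A₃ →ₐ[K] A₁ ⊗[K] (A₂ ⊗[K] A₃) := includeRight
  have hid : productMap includeLeft (productMap (i.comp includeLeft) (i.comp includeRight)) =
      AlgHom.id K (A₁ ⊗[K] (A₂ ⊗[K] A₃)) := by
    ext <;> simp [i]
  simpa only [hid, AlgHom.id_comp] using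
    h (A₁ ⊗[K] (A₂ ⊗[K] A₃)) includeLeft (i.comp includeLeft) (i.comp includeRight)

end ProductMap

section Points

open Algebra.TensorProduct WithConv

/-- The `R`-points of the affine scheme represented by `A`; when `A` is a bialgebra they form a
monoid under convolution, which is why `WithConv` is used. -/
abbrev Points (K A R : Type*) [CommSemiring K] [Semiring A] [Algebra K A] [Semiring R]
    [Algebra K R] : Type _ :=
  WithConv (A →ₐ[K] R)

variable {K A R : Type*} [CommSemiring K] [CommSemiring R] [Algebra K R]

section Operation

variable [Semiring A] [Algebra K A]

/-- The binary operation on `R`-points induced by an algebra map `δ : A → A ⊗ A`. -/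
def pointOp (δ : A →ₐ[K] A ⊗[K] A) (x y : Points K A R) : Points K A R :=
  toConv ((productMap x.ofConv y.ofConv).comp δ)

lemma productMap_comp_map_id_comp (δ δ' : A →ₐ[K] A ⊗[K] A) (x y z : Points K A R) :
    (productMap x.ofConv (productMap y.ofConv z.ofConv)).comp ((map (.id K A) δ).comp δ') =
      (pointOp δ' x (pointOp δ y z)).ofConv := by
  rw [← AlgHom.comp_assoc, productMap_comp_map]
  rfl

lemma productMap_comp_assoc_map_id_comp (δ δ' : A →ₐ[K] A ⊗[K] A) (x y z : Points K A R) :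
    (productMap x.ofConv (productMap y.ofConv z.ofConv)).comp
        ((Algebra.TensorProduct.assoc K K K A A A).toAlgHom.comp ((map δ (.id K A)).comp δ')) =
      (pointOp δ' (pointOp δ x y) z).ofConv := by
  rw [← AlgHom.comp_assoc, productMap_comp_assoc, ← AlgHom.comp_assoc, productMap_comp_map]
  rfl

end Operation

lemma mul_eq_pointOp [Semiring A] [Bialgebra K A] (x y : Points K A R) :
    x * y = pointOp (Bialgebra.comulAlgHom K A) x y := by
  rw [AlgHom.convMul_def, pointOp, productMap_eq_comp_map, AlgHom.comp_assoc]

variable [CommSemiring A] [HopfAlgebra K A]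

lemma productMap_antipode_id_comp_comul :
    (productMap (HopfAlgebra.antipodeAlgHom K A) (.id K A)).comp (Bialgebra.comulAlgHom K A) =
      (Algebra.ofId K A).comp (Bialgebra.counitAlgHom K A) :=
  (eq_productMap_comp_iff.2 HopfAlgebra.mul_antipode_rTensor_comul.symm).symm

/-- Unlike `AlgHom.convGroup`, this does not ask for a bialgebra structure on `R`. -/
instance : Group (Points K A R) where
  inv x := toConv (x.ofConv.comp (HopfAlgebra.antipodeAlgHom K A))
  inv_mul_cancel x := by
    rw [mul_eq_pointOp, AlgHom.convOne_def]
    ext1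
    calc
      (productMap (x.ofConv.comp (HopfAlgebra.antipodeAlgHom K A)) x.ofConv).comp
          (Bialgebra.comulAlgHom K A) =
        x.ofConv.comp ((productMap (HopfAlgebra.antipodeAlgHom K A) (.id K A)).comp
          (Bialgebra.comulAlgHom K A)) := by
        rw [← AlgHom.comp_assoc, comp_productMap, AlgHom.comp_id]
      _ = (Algebra.ofId K R).comp (Bialgebra.counitAlgHom K A) := by
        rw [productMap_antipode_id_comp_comul, ← AlgHom.comp_assoc, Algebra.comp_ofId]

lemma Points.ofConv_inv (x : Points K A R) :
    x⁻¹.ofConv = x.ofConv.comp (HopfAlgebra.antipodeAlgHom K A) :=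
  rfl

/-- The algebra map `a ↦ a_{1'} T(a_{2'(-1)}) ⊗ a_{2'(0)}`, which induces the operation `circ` on
points. -/
def comulOfCoaction (ρ : A →ₐ[K] A ⊗[K] A) : A →ₐ[K] A ⊗[K] A :=
  (productMap includeLeft ((map (HopfAlgebra.antipodeAlgHom K A) (.id K A)).comp ρ)).comp
    (Bialgebra.comulAlgHom K A)

/-- The algebra map `a ↦ a_{(-1)} T(a_{(0)})`, which induces the inversion of `circ` on points. -/
def antipodeOfCoaction (ρ : A →ₐ[K] A ⊗[K] A) : A →ₐ[K] A :=
  (productMap (.id K A) (HopfAlgebra.antipodeAlgHom K A)).comp ρ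

lemma pointOp_comulOfCoaction (ρ : A →ₐ[K] A ⊗[K] A) (x y : Points K A R) :
    pointOp (comulOfCoaction ρ) x y = circ (pointOp ρ) x y := by
  rw [circ, mul_eq_pointOp]
  ext1
  simp only [pointOp, comulOfCoaction, ← AlgHom.comp_assoc, comp_productMap, productMap_left,
    productMap_comp_map, AlgHom.comp_id, Points.ofConv_inv]

lemma comp_antipodeOfCoaction (ρ : A →ₐ[K] A ⊗[K] A) (x : Points K A R) :
    toConv (x.ofConv.comp (antipodeOfCoaction ρ)) = pointOp ρ x x⁻¹ := by
  simp only [pointOp, antipodeOfCoaction, ← AlgHom.comp_assoc, comp_productMap, AlgHom.comp_id,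
    Points.ofConv_inv]

lemma isBraidedPair_pointOp {ρ φ : A →ₐ[K] A ⊗[K] A}
    (hρ_coassoc : (map (.id K A) ρ).comp ρ =
      (Algebra.TensorProduct.assoc K K K A A A).toAlgHom.comp
        ((map (Bialgebra.comulAlgHom K A) (.id K A)).comp ρ))
    (hρ_counit : (Algebra.TensorProduct.lid K A).toAlgHom.comp
      ((map (Bialgebra.counitAlgHom K A) (.id K A)).comp ρ) = .id K A)
    (hcounit_ρ : (Algebra.TensorProduct.rid K K A).toAlgHom.comp
      ((map (.id K A) (Bialgebra.counitAlgHom K A)).comp ρ) =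
        (Algebra.ofId K A).comp (Bialgebra.counitAlgHom K A))
    (hcomul_ρ : (map (.id K A) (Bialgebra.comulAlgHom K A)).comp ρ =
      (productMap ((map (.id K A) includeLeft).comp ρ)
        ((Algebra.TensorProduct.assoc K K K A A A).toAlgHom.comp
          ((map φ (.id K A)).comp ρ))).comp (Bialgebra.comulAlgHom K A))
    (hbraided : Bialgebra.comulAlgHom K A = (productMap ρ φ).comp (Bialgebra.comulAlgHom K A)) :
    IsBraidedPair (G := Points K A R) (pointOp ρ) (pointOp φ) where
  one_left x := by
    rw [AlgHom.convOne_def]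
    ext1
    simpa only [pointOp, ← AlgHom.comp_assoc, lid_comp_map_id, comp_productMap,
      Algebra.comp_ofId, AlgHom.comp_id] using congrArg x.ofConv.comp hρ_counit
  left_one x := by
    rw [AlgHom.convOne_def]
    ext1
    simpa only [pointOp, ← AlgHom.comp_assoc, rid_comp_map_id, comp_productMap,
      Algebra.comp_ofId, AlgHom.comp_id] using congrArg x.ofConv.comp hcounit_ρ
  mul_left x y z := by
    ext1
    rw [mul_eq_pointOp, ← productMap_comp_assoc_map_id_comp, ← hρ_coassoc,
      productMap_comp_map_id_comp]
  left_mul x y z := by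
    ext1
    rw [mul_eq_pointOp, ← productMap_comp_map_id_comp, hcomul_ρ, ← AlgHom.comp_assoc,
      comp_productMap, productMap_comp_assoc_map_id_comp, ← AlgHom.comp_assoc,
      productMap_comp_map, productMap_left, AlgHom.comp_id, mul_eq_pointOp]
    rfl
  braided x y := by
    ext1
    rw [mul_eq_pointOp, pointOp, hbraided, ← AlgHom.comp_assoc, comp_productMap, mul_eq_pointOp]
    rfl

end Points

section HopfStruct

open Algebra.TensorProduct WithConv

universe u

variable {k}

/-- The Mathlib Hopf algebra given by a `HopfStruct`. -/
abbrev HopfStruct.toHopfAlgebra_s15 {A : Type*} [Ring A] [Algebra k A] (B : HopfStruct k A) :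
    HopfAlgebra k A where
  comul := B.Δ
  counit := B.ε
  antipode := B.S
  coassoc := LinearMap.ext fun a ↦ (B.coassoc a).symm
  rTensor_counit_comp_comul := LinearMap.ext fun a ↦
    (TensorProduct.lid k A).injective ((B.counit_left a).trans (by simp))
  lTensor_counit_comp_comul := LinearMap.ext fun a ↦
    (TensorProduct.rid k A).injective ((B.counit_right a).trans (by simp))
  counit_one := B.counit_one
  mul_compr₂_counit := LinearMap.ext₂ B.counit_mul
  comul_one := B.comul_one
  mul_compr₂_comul := LinearMap.ext₂ B.comul_mul
  mul_antipode_rTensor_comul := LinearMap.ext B.antipode_left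
  mul_antipode_lTensor_comul := LinearMap.ext B.antipode_right

variable {A : Type u} [CommRing A] [Algebra k A]

/-- The Hopf algebra structure whose comultiplication `δ`, counit `e` and antipode `s` are algebra
maps inducing the group laws on points. -/
def HopfStruct.ofPoints (δ : A →ₐ[k] A ⊗[k] A) (e : A →ₐ[k] k) (s : A →ₐ[k] A)
    (assoc : ∀ (R : Type u) [CommSemiring R] [Algebra k R] (x y z : Points k A R),
      pointOp δ (pointOp δ x y) z = pointOp δ x (pointOp δ y z))
    (one_op : ∀ (R : Type u) [CommSemiring R] [Algebra k R] (x : Points k A R),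
      pointOp δ (toConv ((Algebra.ofId k R).comp e)) x = x)
    (op_one : ∀ (R : Type u) [CommSemiring R] [Algebra k R] (x : Points k A R),
      pointOp δ x (toConv ((Algebra.ofId k R).comp e)) = x)
    (inv_op : ∀ (R : Type u) [CommSemiring R] [Algebra k R] (x : Points k A R),
      pointOp δ (toConv (x.ofConv.comp s)) x = toConv ((Algebra.ofId k R).comp e))
    (op_inv : ∀ (R : Type u) [CommSemiring R] [Algebra k R] (x : Points k A R),
      pointOp δ x (toConv (x.ofConv.comp s)) = toConv ((Algebra.ofId k R).comp e)) :
    HopfStruct k A where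
  Δ := δ.toLinearMap
  ε := e.toLinearMap
  S := s.toLinearMap
  coassoc := by
    have h : (map (.id k A) δ).comp δ = (Algebra.TensorProduct.assoc k k k A A A).toAlgHom.comp
        ((map δ (.id k A)).comp δ) :=
      algHom_tensor_tensor_ext fun R _ _ x y z ↦ by
        rw [productMap_comp_map_id_comp δ δ (toConv x) (toConv y) (toConv z), ← assoc,
          productMap_comp_assoc_map_id_comp δ δ (toConv x) (toConv y) (toConv z)]
    exact DFunLike.congr_fun h
  counit_left := by
    have h : (Algebra.TensorProduct.lid k A).toAlgHom.comp ((map e (.id k A)).comp δ) =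
        .id k A := by
      rw [← AlgHom.comp_assoc, lid_comp_map_id]
      exact congrArg ofConv (one_op A (toConv (.id k A)))
    exact DFunLike.congr_fun h
  counit_right := by
    have h : (Algebra.TensorProduct.rid k k A).toAlgHom.comp ((map (.id k A) e).comp δ) =
        .id k A := by
      rw [← AlgHom.comp_assoc, rid_comp_map_id]
      exact congrArg ofConv (op_one A (toConv (.id k A)))
    exact DFunLike.congr_fun h
  comul_mul := map_mul δ
  comul_one := map_one δ
  counit_mul := map_mul e
  counit_one := map_one e
  antipode_left a := by
    have h := DFunLike.congr_fun (congrArg ofConv (inv_op A (toConv (.id k A)))) a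
    rwa [pointOp, productMap_eq_comp_map] at h
  antipode_right a := by
    have h := DFunLike.congr_fun (congrArg ofConv (op_inv A (toConv (.id k A)))) a
    rwa [pointOp, productMap_eq_comp_map] at h

lemma mul₃_comp_map {B C D M : Type*} [Semiring B] [Algebra k B] [Semiring C] [Algebra k C]
    [Semiring D] [Algebra k D] [CommRing M] [Algebra k M] (f : B →ₐ[k] M) (g : C →ₐ[k] M)
    (h : D →ₐ[k] M) :
    mul₃ k M ∘ₗ TensorProduct.map f.toLinearMap
        (TensorProduct.map g.toLinearMap h.toLinearMap) =
      (productMap f (productMap g h)).toLinearMap := by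
  rw [mul₃, LinearMap.comp_assoc, ← TensorProduct.map_comp, LinearMap.id_comp,
    ← toLinearMap_productMap, ← toLinearMap_productMap]

lemma braceRHS_toLinearMap (δ δ' : A →ₐ[k] A ⊗[k] A) (s : A →ₐ[k] A) :
    braceRHS k A δ.toLinearMap δ'.toLinearMap s.toLinearMap =
      AlgHom.toLinearMap ((productMap ((map (.id k A) (includeLeft (B := A))).comp δ')
        (productMap ((includeLeft (B := A ⊗[k] A)).comp s)
          ((map (.id k A) (includeRight (A := A))).comp δ'))).comp
            ((map (.id k A) δ).comp δ)) := by
  rw [AlgHom.comp_toLinearMap, ← mul₃_comp_map]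
  rfl

lemma braceLHS_eq_braceRHS (δ δ' : A →ₐ[k] A ⊗[k] A) (s : A →ₐ[k] A)
    (h : ∀ (R : Type u) [CommSemiring R] [Algebra k R] (x y z : Points k A R),
      pointOp δ' x (pointOp δ y z) =
        pointOp δ (pointOp δ' x y)
          (pointOp δ (toConv (x.ofConv.comp s)) (pointOp δ' x z))) :
    braceLHS k A δ.toLinearMap δ'.toLinearMap =
      braceRHS k A δ.toLinearMap δ'.toLinearMap s.toLinearMap := by
  rw [braceRHS_toLinearMap]
  refine congrArg AlgHom.toLinearMap (algHom_tensor_tensor_ext (f := (map (.id k A) δ).comp δ')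
    fun R _ _ x y z ↦ ?_)
  have hLHS := productMap_comp_map_id_comp δ δ' (toConv x) (toConv y) (toConv z)
  rw [hLHS, h, ← productMap_comp_map_id_comp, ← AlgHom.comp_assoc]
  simp only [pointOp, comp_productMap, ← AlgHom.comp_assoc, productMap_comp_map, productMap_left,
    productMap_right, AlgHom.comp_id]

end HopfStruct

section Coaction

open Algebra.TensorProduct WithConv

universe u

variable {k} {A : Type u} [CommRing A] [HopfAlgebra k A] {ρ φ : A →ₐ[k] A ⊗[k] A}

lemma toLinearMap_comulOfCoaction (ρ : A →ₐ[k] A ⊗[k] A) :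
    (comulOfCoaction ρ).toLinearMap =
      Δfromρ k A Coalgebra.comul (HopfAlgebra.antipode k) ρ.toLinearMap := by
  rw [comulOfCoaction, AlgHom.comp_toLinearMap, toLinearMap_productMap]
  rfl

lemma toLinearMap_antipodeOfCoaction (ρ : A →ₐ[k] A ⊗[k] A) :
    (antipodeOfCoaction ρ).toLinearMap =
      Sfromρ k A (HopfAlgebra.antipode k) ρ.toLinearMap := by
  rw [antipodeOfCoaction, AlgHom.comp_toLinearMap, toLinearMap_productMap]
  rfl

/-- The Hopf algebra structure `(A, m, 1, Δ, ε, S)` obtained from a coaction `ρ` which is part of a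
braided pair on points. -/
def HopfStruct.ofCoaction
    (h : ∀ (R : Type u) [CommSemiring R] [Algebra k R],
      IsBraidedPair (G := Points k A R) (pointOp ρ) (pointOp φ)) :
    HopfStruct k A :=
  .ofPoints (comulOfCoaction ρ) (Bialgebra.counitAlgHom k A) (antipodeOfCoaction ρ)
    (fun R _ _ x y z ↦ by simp only [pointOp_comulOfCoaction, (h R).circ_assoc])
    (fun R _ _ x ↦ (pointOp_comulOfCoaction ρ _ x).trans ((h R).one_circ x))
    (fun R _ _ x ↦ (pointOp_comulOfCoaction ρ x _).trans ((h R).circ_one x))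
    (fun R _ _ x ↦ by
      rw [pointOp_comulOfCoaction, comp_antipodeOfCoaction, (h R).left_inv_circ,
        AlgHom.convOne_def])
    (fun R _ _ x ↦ by
      rw [pointOp_comulOfCoaction, comp_antipodeOfCoaction, (h R).circ_left_inv,
        AlgHom.convOne_def])

lemma braceLHS_comulOfCoaction
    (h : ∀ (R : Type u) [CommSemiring R] [Algebra k R],
      IsBraidedPair (G := Points k A R) (pointOp ρ) (pointOp φ)) :
    braceLHS k A (comulOfCoaction ρ).toLinearMap Coalgebra.comul =
      braceRHS k A (comulOfCoaction ρ).toLinearMap Coalgebra.comul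
        (antipodeOfCoaction ρ).toLinearMap :=
  braceLHS_eq_braceRHS (comulOfCoaction ρ) (Bialgebra.comulAlgHom k A) (antipodeOfCoaction ρ)
    fun R _ _ x y z ↦ by
      simp only [pointOp_comulOfCoaction, comp_antipodeOfCoaction, ← mul_eq_pointOp,
        (h R).mul_circ x y z]

end Coaction

/-- Proposition 3.4.  Let `(A, Δ', ε)` be a commutative Hopf
algebra with antipode `T`, and let `(A, A)` be a Hopf matched pair (both Hopf
algebra structures being `(A, Δ')`) with coactions `ρ` and `φ` such that (3.1):
`a_{1'} ⊗ a_{2'} = a_{1'(-1)} a_{2'[0]} ⊗ a_{1'(0)} a_{2'[1]}` for all `a`.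
Define `Δ(a) = a_{1'} T(a_{2'(-1)}) ⊗ a_{2'(0)}` and `S(a) = a_{(-1)} T(a_{(0)})`.
Then `(A, m, 1, Δ, ε, S)` is a Hopf algebra and `(A, Δ, Δ')` is a commutative
Hopf brace. -/
theorem proposition_3_4 {k : Type*} [Field k] {A : Type*} [Ring A] [Algebra k A]
    (B : HopfStruct k A) (hcomm : ∀ x y : A, x * y = y * x)
    (ρ φ : A →ₗ[k] A ⊗[k] A)
    (hmp : IsHopfMatchedPair k A A B.Δ B.ε B.Δ B.ε ρ φ)
    (h31 : ∀ a : A,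
      B.Δ a = LinearMap.mul' k (A ⊗[k] A) (TensorProduct.map ρ φ (B.Δ a))) :
    ∃ hb : HopfBrace k A,
      hb.fst.Δ = Δfromρ k A B.Δ B.S ρ ∧
      hb.fst.ε = B.ε ∧
      hb.fst.S = Sfromρ k A B.S ρ ∧
      hb.snd = B := by
  let _ : CommRing A := { ‹Ring A› with mul_comm := hcomm }
  let _ : HopfAlgebra k A := B.toHopfAlgebra_s15
  obtain ⟨⟨hρ_coassoc, hρ_counit⟩, ⟨hρ_mul, hρ_one⟩, -, ⟨hφ_mul, hφ_one⟩, hcounit_ρ, -, hcomul_ρ,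
    -, -⟩ := hmp
  let ρ' : A →ₐ[k] A ⊗[k] A := AlgHom.ofLinearMap ρ hρ_one hρ_mul
  let φ' : A →ₐ[k] A ⊗[k] A := AlgHom.ofLinearMap φ hφ_one hφ_mul
  have h (R : Type _) [CommSemiring R] [Algebra k R] :
      IsBraidedPair (G := Points k A R) (pointOp ρ') (pointOp φ') :=
    isBraidedPair_pointOp (AlgHom.ext hρ_coassoc) (AlgHom.ext hρ_counit) (AlgHom.ext hcounit_ρ)
      (eq_productMap_comp_iff.2 (LinearMap.ext hcomul_ρ))
      (eq_productMap_comp_iff.2 (LinearMap.ext h31))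
  exact ⟨⟨.ofCoaction h, B, DFunLike.congr_fun (braceLHS_comulOfCoaction h)⟩,
    toLinearMap_comulOfCoaction ρ', rfl, toLinearMap_antipodeOfCoaction ρ', rfl⟩

end HopfPaper
end
end
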